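/- arXiv:1311.1562 — 2 statements merged into one kernel-verified Lean document; each statement's English description precedes it below -/
import Mathlib

section
/- Let (S, Sigma, mu) be an atomless probability space and let phi : S -> [0,1] be a measurable map that generates Sigma modulo mu-null sets, meaning that for every A in Sigma there exists a Borel set B contained in [0,1] with mu(A symmetric-difference phi^{-1}(B)) = 0. Then the pushforward measure mu composed with phi^{-1} on [0,1] is atomless; in particular, mu(phi^{-1}({l})) = 0 for every l in [0,1], and the distribution function l -> mu(phi^{-1}([0,l])) is continuous. -/
open MeasureTheory

/-!
If `D ⊆ φ⁻¹(B)` witnesses that `φ⁻¹(B)` is not an atom and `D = φ⁻¹(C)` modulo null sets, then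
`B ∩ C` witnesses that `B` is not an atom of the pushforward: its preimage is `D` modulo null sets.
A singleton has no subset of strictly smaller positive measure, so it is null, and the distribution
function has no jumps.
-/

open Set Filter Topology
open scoped ENNReal

section Atomless

variable {α β : Type*} [MeasurableSpace α] [MeasurableSpace β] {μ : Measure α} {f : α → β}

/-- Atomless measures in the sense of measure algebras: every measurable set of positive measure
splits off a measurable part of strictly smaller positive measure. Mathlib's
`NullSingletonClass` only says that singletons are null. -/
def IsAtomless (μ : Measure α) : Prop :=
  ∀ D : Set α, MeasurableSet D → 0 < μ D → ∃ D₀ ⊆ D, MeasurableSet D₀ ∧ 0 < μ D₀ ∧ μ D₀ < μ D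

/-- The map `f` generates the σ-algebra of its domain modulo `μ`-null sets: every measurable set is
the preimage of a measurable set up to a null set. -/
def GeneratesModuloNull (f : α → β) (μ : Measure α) : Prop :=
  ∀ A : Set α, MeasurableSet A → ∃ B : Set β, MeasurableSet B ∧ μ (symmDiff A (f ⁻¹' B)) = 0

theorem IsAtomless.exists_subset_of_nullMeasurableSet (hμ : IsAtomless μ) {s : Set α}
    (hs : NullMeasurableSet s μ) (hpos : 0 < μ s) :
    ∃ D ⊆ s, MeasurableSet D ∧ 0 < μ D ∧ μ D < μ s := by
  obtain ⟨t, hts, ht, ht_ae⟩ := hs.exists_measurable_subset_ae_eq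
  rw [← measure_congr ht_ae] at hpos ⊢
  obtain ⟨D, hDt, hD⟩ := hμ t ht hpos
  exact ⟨D, hDt.trans hts, hD⟩

theorem GeneratesModuloNull.exists_subset_map_eq (hgen : GeneratesModuloNull f μ)
    (hf : AEMeasurable f μ) {B : Set β} (hB : MeasurableSet B) {D : Set α} (hD : MeasurableSet D)
    (hDB : D ⊆ f ⁻¹' B) : ∃ B' ⊆ B, MeasurableSet B' ∧ μ.map f B' = μ D := by
  obtain ⟨C, hC, hDC⟩ := hgen D hD
  have h_ae : (f ⁻¹' (B ∩ C) : Set α) =ᵐ[μ] D := by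
    have h_inter := (EventuallyEq.refl (ae μ) (f ⁻¹' B)).inter (measure_symmDiff_eq_zero_iff.mp hDC)
    rw [inter_eq_self_of_subset_right hDB] at h_inter
    exact h_inter.symm
  refine ⟨B ∩ C, inter_subset_left, hB.inter hC, ?_⟩
  rw [Measure.map_apply_of_aemeasurable hf (hB.inter hC), measure_congr h_ae]

theorem IsAtomless.map (hμ : IsAtomless μ) (hf : AEMeasurable f μ)
    (hgen : GeneratesModuloNull f μ) : IsAtomless (μ.map f) := by
  intro B hB hpos
  rw [Measure.map_apply_of_aemeasurable hf hB] at hpos ⊢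
  obtain ⟨D, hDB, hD, hD_pos, hD_lt⟩ :=
    hμ.exists_subset_of_nullMeasurableSet (hf.nullMeasurableSet_preimage hB) hpos
  obtain ⟨B', hB'B, hB', hB'_eq⟩ := hgen.exists_subset_map_eq hf hB hD hDB
  exact ⟨B', hB'B, hB', hB'_eq ▸ hD_pos, hB'_eq ▸ hD_lt⟩

theorem IsAtomless.nullSingletonClass [MeasurableSingletonClass α] (hμ : IsAtomless μ) :
    NullSingletonClass μ where
  measure_singleton x := by
    by_contra hx
    obtain ⟨D, hDx, -, hD_pos, hD_lt⟩ := hμ {x} (measurableSet_singleton x) (pos_iff_ne_zero.mpr hx)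
    rcases subset_singleton_iff_eq.mp hDx with rfl | rfl
    · exact hD_pos.ne' measure_empty
    · exact hD_lt.false

end Atomless

section DistributionFunction

variable {Y : Type*} [TopologicalSpace Y] [LinearOrder Y] [OrderClosedTopology Y]

theorem eventually_mem_Icc_right_iff_of_ne (a : Y) {x l : Y} (hx : x ≠ l) :
    ∀ᶠ y in 𝓝 l, (x ∈ Icc a y ↔ x ∈ Icc a l) := by
  rcases hx.lt_or_gt with hxl | hlx
  · filter_upwards [Ioi_mem_nhds hxl] with y hxy
    simp [(mem_Ioi.mp hxy).le, hxl.le]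
  · filter_upwards [Iio_mem_nhds hlx] with y hyx
    simp [(mem_Iio.mp hyx).not_ge, hlx.not_ge]

theorem continuous_measureReal_Icc_right [FirstCountableTopology Y] [MeasurableSpace Y]
    [OpensMeasurableSpace Y] {ν : Measure Y} [NullSingletonClass ν] {a : Y}
    (hfin : ∀ l, ν (Icc a l) ≠ ∞) : Continuous fun l => ν.real (Icc a l) := by
  refine continuous_iff_continuousAt.mpr fun l => (ENNReal.tendsto_toReal (hfin l)).comp ?_
  obtain ⟨b, hb⟩ := isBounded_le_nhds l
  refine tendsto_measure_of_ae_tendsto_indicator (𝓝 l) measurableSet_Icc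
    (fun _ => measurableSet_Icc) measurableSet_Icc (hfin b)
    (hb.mono fun _ hy => Icc_subset_Icc_right hy) ?_
  filter_upwards [ν.ae_ne l] with x hx using eventually_mem_Icc_right_iff_of_ne a hx

end DistributionFunction

theorem pushforward_atomless_of_generating_map_general
    {S Y : Type*} [MeasurableSpace S] [TopologicalSpace Y] [LinearOrder Y] [OrderClosedTopology Y]
    [FirstCountableTopology Y] [MeasurableSpace Y] [OpensMeasurableSpace Y]
    {μ : Measure S} (hμ : IsAtomless μ) {φ : S → Y} (hφ : AEMeasurable φ μ)
    (hgen : GeneratesModuloNull φ μ) :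
    IsAtomless (μ.map φ) ∧ (∀ l, μ (φ ⁻¹' {l}) = 0) ∧
      ∀ a, (∀ l, μ (φ ⁻¹' Icc a l) ≠ ∞) → Continuous fun l => μ.real (φ ⁻¹' Icc a l) := by
  have h_map : IsAtomless (μ.map φ) := hμ.map hφ hgen
  have : NullSingletonClass (μ.map φ) := h_map.nullSingletonClass
  refine ⟨h_map, fun l => ?_, fun a hfin => ?_⟩
  · rw [← Measure.map_apply_of_aemeasurable hφ (measurableSet_singleton l), measure_singleton]
  · have h_Icc (l : Y) : μ.map φ (Icc a l) = μ (φ ⁻¹' Icc a l) :=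
      Measure.map_apply_of_aemeasurable hφ measurableSet_Icc
    simpa only [measureReal_def, h_Icc] using
      continuous_measureReal_Icc_right fun l => (h_Icc l).trans_ne (hfin l)

/-- If `(S, Σ, μ)` is an atomless probability space and `phi : S → [0,1]` is a measurable
map generating `Σ` modulo `μ`-null sets, then the pushforward measure `μ ∘ phi⁻¹` is
atomless; in particular every singleton preimage is null and the distribution function
`l ↦ μ(phi⁻¹[0,l])` is continuous. -/
theorem pushforward_atomless_of_generating_map
    {S : Type*} [mS : MeasurableSpace S]
    (mu : Measure S) [IsProbabilityMeasure mu]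
    -- `mu` is atomless
    (h_atomless : ∀ D : Set S, MeasurableSet D → 0 < mu D →
      ∃ D₀ ⊆ D, MeasurableSet D₀ ∧ 0 < mu D₀ ∧ mu D₀ < mu D)
    (phi : S → ℝ) (hphi_meas : Measurable phi)
    (hphi_range : ∀ s, phi s ∈ Set.Icc (0 : ℝ) 1)
    -- `phi` generates `Σ` modulo `mu`-null sets
    (hphi_gen : ∀ A : Set S, MeasurableSet A → ∃ B : Set ℝ, MeasurableSet B ∧
      B ⊆ Set.Icc (0 : ℝ) 1 ∧ mu (symmDiff A (phi ⁻¹' B)) = 0) :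
    -- the pushforward `mu.map phi` is atomless ...
    (∀ B : Set ℝ, MeasurableSet B → 0 < mu.map phi B →
      ∃ B' ⊆ B, MeasurableSet B' ∧ 0 < mu.map phi B' ∧ mu.map phi B' < mu.map phi B) ∧
    -- ... in particular singletons have null preimages ...
    (∀ l : ℝ, mu (phi ⁻¹' {l}) = 0) ∧
    -- ... and the distribution function is continuous
    Continuous (fun l : ℝ => (mu (phi ⁻¹' Set.Icc 0 l)).toReal) :=
  have hgen : GeneratesModuloNull phi mu := fun A hA =>
    (hphi_gen A hA).imp fun _ hB => ⟨hB.1, hB.2.2⟩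
  (pushforward_atomless_of_generating_map_general h_atomless hphi_meas.aemeasurable hgen).imp_right
    (And.imp_right fun h_cont => h_cont 0 fun _ => measure_ne_top mu _)
end

section
/- Let eta be Lebesgue measure on [0,1] with Borel sigma-algebra B, and define the transition kernel q : [0,1] x [0,1) -> R by q(s_1 | s) = 1/(1-s) if s_1 is in [s,1] and q(s_1 | s) = 0 if s_1 is in [0,s) (so q(. | s) is the density of the uniform distribution on [s,1]). Suppose that for some positive integer J there are nonnegative jointly measurable functions q_j : [0,1] x [0,1) -> R and nonnegative eta-integrable functions rho_j : [0,1] -> R, j = 1,...,J, with q(s_1 | s) = sum over j = 1,...,J of q_j(s_1, s) * rho_j(s_1) for all s in [0,1) and s_1 in [0,1]. Let G be the strong completion (with respect to eta-null sets in B) of the smallest sigma-algebra on [0,1] making every function q_j(., s), for 1 <= j <= J and s in [0,1), measurable. Then B has a G-atom under eta: there exists D in B with eta(D) > 0 such that for every B-measurable D_0 contained in D there exists D_1 in G with eta(D_0 symmetric-difference (D_1 intersect D)) = 0. Consequently, the atomless part of the transition probability in Levy's counterexample does not have a decomposable coarser transition kernel. -/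
open MeasureTheory

/-!
Since all terms are nonnegative, `∑ⱼ qⱼ(x, s) ρⱼ(x) ≠ 0` exactly when `qⱼ(x, s) ≠ 0` for some `j`
in the pattern `{j | ρⱼ(x) ≠ 0}`. There are finitely many patterns, so some pattern `S` is shared
by all points of a set `D ⊆ [0, 1)` of positive measure. On `D` the support of the kernel at `s`,
namely `[s, 1]`, has the same trace as `⋃ j ∈ S, {x | qⱼ(x, s) ≠ 0}`, which lies in `G`. These
supports generate the Borel sets, so every Borel subset of `D` is the trace on `D` of a set in `G`,
without discarding any null set.
-/

section GAtom

variable {Ω : Type*} {G m : MeasurableSpace Ω} {μ : Measure Ω}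

/-- A `G`-atom of `μ` for the strong completion of `G`: a measurable set of positive measure on
which every measurable subset agrees, up to a `μ`-null set, with a set of the completion. The
members of the completion are spelled out as `E ∆ E₀` with `E ∈ G` and `E₀` measurable and
`μ`-null. `G` need not be contained in the ambient `σ`-algebra. -/
def IsGAtom (G : MeasurableSpace Ω) {_ : MeasurableSpace Ω} (μ : Measure Ω) (D : Set Ω) : Prop :=
  MeasurableSet D ∧ 0 < μ D ∧
    ∀ D₀ ⊆ D, MeasurableSet D₀ →
      ∃ D₁ E E₀ : Set Ω, MeasurableSet[G] E ∧ MeasurableSet E₀ ∧ μ E₀ = 0 ∧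
        D₁ = symmDiff E E₀ ∧ μ (symmDiff D₀ (D₁ ∩ D)) = 0

theorem isGAtom_of_comap_coe_le {D : Set Ω} (hD : MeasurableSet D) (hμD : 0 < μ D)
    (h : m.comap ((↑) : D → Ω) ≤ G.comap (↑)) : IsGAtom G μ D := by
  refine ⟨hD, hμD, fun D₀ hD₀ hD₀m => ?_⟩
  obtain ⟨E, hE, hED⟩ := h _ ⟨D₀, hD₀m, rfl⟩
  have trace_eq : E ∩ D = D₀ := by
    rw [Set.inter_comm, Subtype.preimage_coe_eq_preimage_coe_iff.1 hED, Set.inter_eq_right.2 hD₀]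
  refine ⟨E, E, ∅, hE, .empty, measure_empty, (symmDiff_bot E).symm, ?_⟩
  rw [trace_eq, symmDiff_self, Set.bot_eq_empty, measure_empty]

end GAtom

section Pigeonhole

variable {Ω β : Type*} [MeasurableSpace Ω] {μ : Measure Ω}
  [Countable β] [MeasurableSpace β] [MeasurableSingletonClass β]

theorem exists_measurableSet_pos_subset_inter_preimage_singleton {f : Ω → β}
    (hf : NullMeasurable f μ) {A : Set Ω} (hA : NullMeasurableSet A μ) (hμA : μ A ≠ 0) :
    ∃ b, ∃ D ⊆ A ∩ f ⁻¹' {b}, MeasurableSet D ∧ 0 < μ D := by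
  have cover : ⋃ b, A ∩ f ⁻¹' {b} = A := by
    rw [← Set.inter_iUnion, ← Set.preimage_iUnion, Set.iUnion_of_singleton, Set.preimage_univ,
      Set.inter_univ]
  obtain ⟨b, hb⟩ := exists_measure_pos_of_not_measure_iUnion_null (cover ▸ hμA)
  obtain ⟨D, hDsub, hD, hDae⟩ :=
    (hA.inter (hf (measurableSet_singleton b))).exists_measurable_subset_ae_eq
  exact ⟨b, D, hDsub, hD, measure_congr hDae ▸ hb⟩

end Pigeonhole

section FiniteDecomposition

variable {Ω ι R : Type*}

theorem aemeasurable_setOf_ne_zero [Countable ι] [Zero R] [MeasurableSpace R]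
    [MeasurableSingletonClass R] [MeasurableSpace Ω] {μ : Measure Ω} {ρ : ι → Ω → R}
    (hρ : ∀ j, AEMeasurable (ρ j) μ) : AEMeasurable (fun x => {j | ρ j x ≠ 0}) μ :=
  aemeasurable_pi_lambda _ fun j =>
    (measurableSet_setOfPred.1 (measurableSet_singleton (0 : R)).compl).comp_aemeasurable (hρ j)

variable [Fintype ι] [Semiring R] [PartialOrder R] [IsOrderedRing R] [NoZeroDivisors R]

theorem sum_mul_ne_zero_iff_of_nonneg {a b : ι → R} (ha : ∀ j, 0 ≤ a j) (hb : ∀ j, 0 ≤ b j) :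
    ∑ j, a j * b j ≠ 0 ↔ ∃ j, a j ≠ 0 ∧ b j ≠ 0 := by
  rw [Ne, Finset.sum_eq_zero_iff_of_nonneg fun j _ => mul_nonneg (ha j) (hb j)]
  simp only [Finset.mem_univ, true_imp_iff, mul_eq_zero, not_forall, not_or, ne_eq]

variable [MeasurableSpace R] [MeasurableSingletonClass R] {G : MeasurableSpace Ω}

theorem measurableSet_comap_coe_setOf_sum_mul_ne_zero {a ρ : ι → Ω → R}
    (ha : ∀ j, Measurable[G] (a j)) (ha_nonneg : ∀ j x, 0 ≤ a j x) (hρ_nonneg : ∀ j x, 0 ≤ ρ j x)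
    {S : Set ι} {D : Set Ω} (hD : ∀ x ∈ D, {j | ρ j x ≠ 0} = S) :
    MeasurableSet[G.comap ((↑) : D → Ω)] {x | ∑ j, a j x * ρ j x ≠ 0} := by
  refine ⟨⋃ j ∈ S, a j ⁻¹' {0}ᶜ, ?_, ?_⟩
  · exact .iUnion fun j => .iUnion fun _ => ha j (measurableSet_singleton 0).compl
  · ext ⟨x, hx⟩
    simp [sum_mul_ne_zero_iff_of_nonneg (ha_nonneg · x) (hρ_nonneg · x), ← hD x hx, and_comm]

theorem exists_isGAtom_of_sum_mul_supports_generate {T : Type*} [m : MeasurableSpace Ω]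
    {μ : Measure Ω} {A : Set Ω} (hA : NullMeasurableSet A μ) (hμA : μ A ≠ 0)
    {a : ι → T → Ω → R} {ρ : ι → Ω → R} (ha : ∀ j t, Measurable[G] (a j t))
    (hρ : ∀ j, AEMeasurable (ρ j) μ) (ha_nonneg : ∀ j t x, 0 ≤ a j t x)
    (hρ_nonneg : ∀ j x, 0 ≤ ρ j x)
    (hgen : m.comap ((↑) : A → Ω) ≤
      .generateFrom (Set.range fun t => {x : A | ∑ j, a j t x * ρ j x ≠ 0})) :
    ∃ D, IsGAtom G μ D := by
  obtain ⟨S, D, hDsub, hD, hμD⟩ := exists_measurableSet_pos_subset_inter_preimage_singleton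
    (aemeasurable_setOf_ne_zero hρ).nullMeasurable hA hμA
  have hDA : D ⊆ A := fun x hx => (hDsub hx).1
  refine ⟨D, isGAtom_of_comap_coe_le hD hμD ?_⟩
  calc m.comap ((↑) : D → Ω)
      = (m.comap ((↑) : A → Ω)).comap (Set.inclusion hDA) :=
        (MeasurableSpace.comap_comp (f := Subtype.val) (g := Set.inclusion hDA)).symm
    _ ≤ (MeasurableSpace.generateFrom _).comap (Set.inclusion hDA) :=
        MeasurableSpace.comap_mono hgen
    _ = .generateFrom _ := MeasurableSpace.comap_generateFrom
    _ ≤ G.comap ((↑) : D → Ω) := MeasurableSpace.generateFrom_le <| by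
        rintro _ ⟨_, ⟨t, rfl⟩, rfl⟩
        exact measurableSet_comap_coe_setOf_sum_mul_ne_zero (ha · t) (ha_nonneg · t) hρ_nonneg
          fun x hx => (hDsub hx).2

end FiniteDecomposition

theorem levy_kernel_ne_zero_iff {q : ℝ → ℝ → ℝ}
    (hq : ∀ s ∈ Set.Ico (0 : ℝ) 1, ∀ s₁ : ℝ,
      q s₁ s = if s₁ ∈ Set.Icc s 1 then 1 / (1 - s) else 0) :
    ∀ s ∈ Set.Ico (0 : ℝ) 1, ∀ s₁ ∈ Set.Ico (0 : ℝ) 1, q s₁ s ≠ 0 ↔ s ≤ s₁ := by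
  intro s hs s₁ hs₁
  simp [hq s hs, hs₁.2.le, (sub_pos.2 hs.2).ne']

theorem levy_uniform_kernel_has_gAtom_general {α ι R : Type*}
    [LinearOrder α] [TopologicalSpace α] [OrderTopology α] [SecondCountableTopology α]
    {G : MeasurableSpace α} [MeasurableSpace α] [BorelSpace α] [Fintype ι]
    [Semiring R] [PartialOrder R] [IsOrderedRing R] [NoZeroDivisors R]
    [MeasurableSpace R] [MeasurableSingletonClass R]
    {η : Measure α} {A : Set α} [A.OrdConnected] (hA : NullMeasurableSet A η) (hηA : η A ≠ 0)
    {q : α → α → R} (hq : ∀ s ∈ A, ∀ s₁ ∈ A, q s₁ s ≠ 0 ↔ s ≤ s₁)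
    {qj : ι → α → α → R} {rho : ι → α → R}
    (hqj_nonneg : ∀ j s₁ s, 0 ≤ qj j s₁ s) (hrho_nonneg : ∀ j s₁, 0 ≤ rho j s₁)
    (hrho : ∀ j, AEMeasurable (rho j) η)
    (h_decomp : ∀ s ∈ A, ∀ s₁ ∈ A, q s₁ s = ∑ j, qj j s₁ s * rho j s₁)
    (hG : ∀ j, ∀ s ∈ A, Measurable[G] fun s₁ => qj j s₁ s) :
    ∃ D, IsGAtom G η D := by
  refine exists_isGAtom_of_sum_mul_supports_generate (T := A) (a := fun j s s₁ => qj j s₁ s)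
    hA hηA (fun j s => hG j s s.2) hrho (fun j s s₁ => hqj_nonneg j s₁ s) hrho_nonneg ?_
  have supports_eq (s : A) : {x : A | ∑ j, qj j x s * rho j x ≠ 0} = Set.Ici s := by
    ext x
    rw [Set.mem_ofPred_eq, ← h_decomp s s.2 x x.2, hq s s.2 x x.2, Subtype.coe_le_coe, Set.mem_Ici]
  simp only [supports_eq]
  rw [← borel_eq_generateFrom_Ici]
  exact (BorelSpace.measurable_eq (α := A)).le

/-- **Levy's counterexample fails the decomposable coarser kernel condition**: if the
uniform kernel `q(s₁|s) = (1-s)⁻¹ · 1_{[s,1]}(s₁)` on the Lebesgue unit interval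
decomposes as `q(s₁|s) = ∑ⱼ qⱼ(s₁,s) ρⱼ(s₁)` with `qⱼ` nonnegative jointly measurable and
`ρⱼ` nonnegative integrable, and `G` is the strong completion of the σ-algebra generated
by the functions `qⱼ(·,s)`, then the Borel σ-algebra has a `G`-atom. -/
theorem levy_uniform_kernel_has_gAtom
    -- Lebesgue measure on the unit interval
    (eta : Measure ℝ) (h_eta : eta = volume.restrict (Set.Icc 0 1))
    -- the uniform transition kernel of Levy's example
    (q : ℝ → ℝ → ℝ)
    (hq : ∀ s ∈ Set.Ico (0 : ℝ) 1, ∀ s₁ : ℝ,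
      q s₁ s = if s₁ ∈ Set.Icc s 1 then 1 / (1 - s) else 0)
    -- a decomposition `q(s₁|s) = ∑ⱼ qⱼ(s₁,s) ρⱼ(s₁)`
    (J : ℕ) (hJ : 0 < J)
    (qj : Fin J → ℝ → ℝ → ℝ) (rho : Fin J → ℝ → ℝ)
    (hqj_nonneg : ∀ j s₁ s, 0 ≤ qj j s₁ s)
    (hqj_meas : ∀ j, Measurable fun p : ℝ × ℝ => qj j p.1 p.2)
    (hrho_nonneg : ∀ j s₁, 0 ≤ rho j s₁)
    (hrho_int : ∀ j, Integrable (rho j) eta)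
    (h_decomp : ∀ s ∈ Set.Ico (0 : ℝ) 1, ∀ s₁ ∈ Set.Icc (0 : ℝ) 1,
      q s₁ s = ∑ j, qj j s₁ s * rho j s₁)
    -- `G₀` is the smallest σ-algebra making every `qⱼ(·,s)` measurable
    (G₀ : MeasurableSpace ℝ)
    (hG₀ : G₀ = ⨆ (j : Fin J), ⨆ (s : ℝ), ⨆ (_ : s ∈ Set.Ico (0 : ℝ) 1),
      MeasurableSpace.comap (fun s₁ => qj j s₁ s) Real.measurableSpace) :
    -- then the Borel σ-algebra has an atom over the strong completion `G` of `G₀`: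
    -- sets of `G` have the form `E ∆ E₀` with `E ∈ G₀` and `E₀` an `eta`-null Borel set
    ∃ D : Set ℝ, MeasurableSet[Real.measurableSpace] D ∧ 0 < eta D ∧
      ∀ D₀ ⊆ D, MeasurableSet[Real.measurableSpace] D₀ →
        ∃ D₁ E E₀ : Set ℝ, MeasurableSet[G₀] E ∧
          MeasurableSet[Real.measurableSpace] E₀ ∧ eta E₀ = 0 ∧
          D₁ = symmDiff E E₀ ∧ eta (symmDiff D₀ (D₁ ∩ D)) = 0 := by
  subst h_eta hG₀
  exact levy_uniform_kernel_has_gAtom_general measurableSet_Ico.nullMeasurableSet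
    (by simp [Set.inter_eq_left.2 Set.Ico_subset_Icc_self]) (levy_kernel_ne_zero_iff hq)
    hqj_nonneg hrho_nonneg (fun j => (hrho_int j).aemeasurable)
    (fun s hs s₁ hs₁ => h_decomp s hs s₁ (Set.Ico_subset_Icc_self hs₁))
    fun j s hs => measurable_iff_comap_le.2 (le_iSup_of_le j (le_iSup₂_of_le s hs le_rfl))
end
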